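/- Let β ∈ (0,1), α ∈ (0,1+β), and 0 < R ≤ R_1 < ∞. Fix ζ ∈ C_0^∞(B_1) nonnegative, radial, with ∫_{ℝ^d} ζ = 1. There exists a constant C > 0 depending only on d, β, α, ζ such that for every continuous u : ℝ^d → ℝ with [u]_{Λ^α(B_{2R_1})} < ∞, the mollification u^{(R)} satisfies [∇u^{(R)}]_{β;B_{R_1}} ≤ C R^{α−1−β} [u]_{Λ^α(B_{2R_1})}. -/

import Mathlib

open MeasureTheory Metric Filter Set
open scoped ENNReal Topology

noncomputable section

/-- Hölder seminorm `[u]_{γ;Ω}` (valued in `ℝ≥0∞`). -/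
def holderSemi {E F : Type*} [NormedAddCommGroup E] [NormedAddCommGroup F]
    (γ : ℝ) (Ω : Set E) (u : E → F) : ℝ≥0∞ :=
  ⨆ (x : E) (_ : x ∈ Ω) (y : E) (_ : y ∈ Ω) (_ : x ≠ y),
    ENNReal.ofReal (‖u x - u y‖ / ‖x - y‖ ^ γ)

/-- Zygmund seminorm `[u]_{Λ^α(Ω)}` (valued in `ℝ≥0∞`). -/
def zygmundSemi {E : Type*} [NormedAddCommGroup E] (α : ℝ) (Ω : Set E) (u : E → ℝ) : ℝ≥0∞ :=
  ⨆ (x : E) (h : E) (_ : h ≠ 0) (_ : x ∈ Ω) (_ : x + h ∈ Ω) (_ : x - h ∈ Ω),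
    ENNReal.ofReal (|u (x + h) + u (x - h) - 2 * u x| / ‖h‖ ^ α)

/-- The `L_∞` norm of `u` on `Ω` (valued in `ℝ≥0∞`). -/
def eSupNorm {E : Type*} (Ω : Set E) (u : E → ℝ) : ℝ≥0∞ :=
  ⨆ (x : E) (_ : x ∈ Ω), ENNReal.ofReal |u x|

/-- A Dini function: nonnegative, nondecreasing on `(0,∞)`, with `∫_0^1 ω(r)/r dr < ∞`. -/
def IsDini (ω : ℝ → ℝ) : Prop :=
  (∀ r, 0 < r → 0 ≤ ω r) ∧ MonotoneOn ω (Set.Ioi (0:ℝ)) ∧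
    IntegrableOn (fun r => ω r / r) (Set.Ioc (0:ℝ) 1)

/-- Mollification `u^{(R)}(x) = ∫ u(x - Ry) ζ(y) dy`. -/
def mollify {d : ℕ} (R : ℝ) (ζ u : EuclideanSpace ℝ (Fin d) → ℝ)
    (x : EuclideanSpace ℝ (Fin d)) : ℝ :=
  ∫ y, u (x - R • y) * ζ y

/-!
By scaling one may take `R = 1`. The second derivative of the mollification is a convolution with
the even, mean zero kernel `D²ζ`, so it only sees second differences of `u` and is bounded by the
Zygmund seminorm; this settles increments of the gradient at bounded distances. The mollification
also inherits the Zygmund bound of `u`. For points `x`, `y` further apart, the gradient is compared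
with the difference quotient whose dyadic step is comparable to `‖x - y‖`: doubling the step from
`t ≥ 1` to `2 * t` costs a multiple of `t ^ (α - 1) ≤ t ^ β`, a geometric series. At that step the
quotients at `x` and `y` differ by the two diagonals of a parallelogram.
-/

open scoped Convolution

/-- The pointwise form of a Zygmund bound on `Ω`: second differences with all three nodes in `Ω`
are at most `K * ‖h‖ ^ α`. It is the analogue of `HolderOnWith` for `zygmundSemi`. -/
def ZygmundOnWith {E F : Type*} [NormedAddCommGroup E] [NormedAddCommGroup F] [NormedSpace ℝ F]
    (K α : ℝ) (Ω : Set E) (u : E → F) : Prop :=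
  ∀ ⦃x h : E⦄, x ∈ Ω → x + h ∈ Ω → x - h ∈ Ω →
    ‖u (x + h) + u (x - h) - (2 : ℝ) • u x‖ ≤ K * ‖h‖ ^ α

/-- The forward difference quotient of `V` at `z` in the direction `e` with step `t`. For unit `e`
it stands in for `fderiv ℝ V z e` at scale `t`. -/
def diffQuot {E F : Type*} [NormedAddCommGroup E] [NormedSpace ℝ E] [NormedAddCommGroup F]
    [NormedSpace ℝ F] (V : E → F) (e : E) (t : ℝ) (z : E) : F :=
  t⁻¹ • (V (z + t • e) - V z)

section Seminorms

variable {E F : Type*} [NormedAddCommGroup E] [NormedAddCommGroup F]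

lemma holderSemi_le_ofReal {γ C : ℝ} {Ω : Set E} {u : E → F}
    (hu : ∀ x ∈ Ω, ∀ y ∈ Ω, ‖u x - u y‖ ≤ C * ‖x - y‖ ^ γ) :
    holderSemi γ Ω u ≤ ENNReal.ofReal C := by
  simp only [holderSemi, iSup_le_iff]
  intro x hx y hy hxy
  have hpos : 0 < ‖x - y‖ ^ γ := Real.rpow_pos_of_pos (norm_sub_pos_iff.2 hxy) _
  exact ENNReal.ofReal_le_ofReal ((div_le_iff₀ hpos).2 (hu x hx y hy))

lemma zygmundOnWith_toReal_zygmundSemi {α : ℝ} {Ω : Set E} {u : E → ℝ}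
    (hu : zygmundSemi α Ω u ≠ ⊤) : ZygmundOnWith (zygmundSemi α Ω u).toReal α Ω u := by
  intro x h hx hxp hxm
  rcases eq_or_ne h 0 with rfl | hh
  · have hcancel : u (x + 0) + u (x - 0) - (2 : ℝ) • u x = 0 := by
      rw [add_zero, sub_zero, two_smul, sub_self]
    rw [hcancel, norm_zero]
    positivity
  · have hle : ENNReal.ofReal (|u (x + h) + u (x - h) - 2 * u x| / ‖h‖ ^ α) ≤ zygmundSemi α Ω u :=
      le_iSup_of_le x <| le_iSup_of_le h <| le_iSup_of_le hh <| le_iSup_of_le hx <|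
        le_iSup_of_le hxp <| le_iSup_of_le hxm le_rfl
    rw [ENNReal.ofReal_le_iff_le_toReal hu] at hle
    exact (div_le_iff₀ (Real.rpow_pos_of_pos (norm_pos_iff.2 hh) _)).1 hle

lemma holderSemi_gradient {E : Type*} [NormedAddCommGroup E] [InnerProductSpace ℝ E]
    [CompleteSpace E] (γ : ℝ) (Ω : Set E) (f : E → ℝ) :
    holderSemi γ Ω (gradient f) = holderSemi γ Ω (fderiv ℝ f) := by
  simp only [holderSemi, gradient, ← map_sub, LinearIsometryEquiv.norm_map]

end Seminorms

section DifferenceQuotients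

variable {E F : Type*} [NormedAddCommGroup E] [NormedSpace ℝ E] [NormedAddCommGroup F]
  [NormedSpace ℝ F] {K L α β r t : ℝ} {Ω : Set E} {V : E → F} {e x y z : E}

lemma add_smul_mem_of_convex {E : Type*} [AddCommGroup E] [Module ℝ E] {Ω : Set E} {z e : E}
    {s t : ℝ} (hΩ : Convex ℝ Ω) (hz : z ∈ Ω) (hzs : z + s • e ∈ Ω) (ht : 0 ≤ t) (hts : t ≤ s) :
    z + t • e ∈ Ω := by
  rcases ht.eq_or_lt with rfl | ht
  · rwa [zero_smul, add_zero]
  · have hs : 0 < s := ht.trans_le hts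
    have hmem := hΩ.add_smul_mem hz hzs ⟨div_nonneg ht.le hs.le, (div_le_one hs).2 hts⟩
    rwa [smul_smul, div_mul_cancel₀ _ hs.ne'] at hmem

namespace ZygmundOnWith

lemma norm_add_sub_two_smul_midpoint_le (hV : ZygmundOnWith K α Ω V) (hx : x ∈ Ω) (hy : y ∈ Ω)
    (hm : midpoint ℝ x y ∈ Ω) :
    ‖V x + V y - (2 : ℝ) • V (midpoint ℝ x y)‖ ≤ K * (‖x - y‖ / 2) ^ α := by
  have hleft : midpoint ℝ x y + (2⁻¹ : ℝ) • (x - y) = x := by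
    rw [midpoint_eq_smul_add, invOf_eq_inv]; module
  have hright : midpoint ℝ x y - (2⁻¹ : ℝ) • (x - y) = y := by
    rw [midpoint_eq_smul_add, invOf_eq_inv]; module
  have hnorm : ‖(2⁻¹ : ℝ) • (x - y)‖ = ‖x - y‖ / 2 := by
    rw [norm_smul, Real.norm_of_nonneg (by norm_num), inv_mul_eq_div]
  have hsecond := hV hm (hleft.symm ▸ hx) (hright.symm ▸ hy)
  rwa [hleft, hright, hnorm] at hsecond

lemma norm_diffQuot_two_mul_sub_le (hV : ZygmundOnWith K α Ω V) (he : ‖e‖ = 1) (ht : 0 < t)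
    (hz : z ∈ Ω) (hzt : z + t • e ∈ Ω) (hzt₂ : z + (2 * t) • e ∈ Ω) :
    ‖diffQuot V e (2 * t) z - diffQuot V e t z‖ ≤ K / 2 * t ^ (α - 1) := by
  have hmid : midpoint ℝ (z + (2 * t) • e) z = z + t • e := by
    rw [midpoint_eq_smul_add, invOf_eq_inv]; module
  have hsecond := hV.norm_add_sub_two_smul_midpoint_le hzt₂ hz (hmid.symm ▸ hzt)
  have hnorm : ‖z + (2 * t) • e - z‖ / 2 = t := by
    rw [add_sub_cancel_left, norm_smul, he, Real.norm_of_nonneg (by positivity)]; ring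
  have hquot : diffQuot V e (2 * t) z - diffQuot V e t z =
      (2 * t)⁻¹ • (V (z + (2 * t) • e) + V z - (2 : ℝ) • V (z + t • e)) := by
    have htwo : t⁻¹ = (2 * t)⁻¹ * 2 := by field_simp
    simp only [diffQuot]
    rw [htwo]
    module
  rw [hmid, hnorm] at hsecond
  rw [hquot, norm_smul, Real.norm_of_nonneg (by positivity), Real.rpow_sub_one ht.ne']
  calc (2 * t)⁻¹ * _ ≤ (2 * t)⁻¹ * (K * t ^ α) := by gcongr
    _ = K / 2 * (t ^ α / t) := by field_simp

lemma norm_diffQuot_two_pow_sub_le (hV : ZygmundOnWith K α Ω V) (hΩ : Convex ℝ Ω) (hK : 0 ≤ K)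
    (hβ : 0 < β) (hαβ : α ≤ 1 + β) (he : ‖e‖ = 1) (n : ℕ) (hz : z ∈ Ω)
    (hzn : z + (2 : ℝ) ^ n • e ∈ Ω) :
    ‖diffQuot V e (2 ^ n) z - diffQuot V e 1 z‖ ≤ K / (2 * (2 ^ β - 1)) * (2 ^ n) ^ β := by
  have hpow (j : ℕ) : ((2 : ℝ) ^ j) ^ β = ((2 : ℝ) ^ β) ^ j := by
    rw [← Real.rpow_natCast_mul zero_le_two, ← Real.rpow_mul_natCast zero_le_two, mul_comm]
  have hratio : 0 < (2 : ℝ) ^ β - 1 := sub_pos.2 (Real.one_lt_rpow one_lt_two hβ)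
  have hmem {j : ℕ} (hj : j ≤ n) : z + (2 : ℝ) ^ j • e ∈ Ω :=
    add_smul_mem_of_convex hΩ hz hzn (by positivity) (pow_le_pow_right₀ one_le_two hj)
  have hstep {j : ℕ} (hj : j < n) :
      dist (diffQuot V e (2 ^ j) z) (diffQuot V e (2 ^ (j + 1)) z) ≤ K / 2 * ((2 : ℝ) ^ β) ^ j := by
    rw [dist_comm, dist_eq_norm, pow_succ', ← hpow]
    refine (hV.norm_diffQuot_two_mul_sub_le he (by positivity) hz (hmem hj.le)
      (pow_succ' (2 : ℝ) j ▸ hmem hj)).trans ?_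
    gcongr
    · exact one_le_pow₀ one_le_two
    · linarith
  have htel := dist_le_range_sum_of_dist_le n hstep
  rw [dist_comm, dist_eq_norm, pow_zero, ← Finset.mul_sum,
    geom_sum_eq (sub_pos.1 hratio).ne'] at htel
  calc _ ≤ K / 2 * ((((2 : ℝ) ^ β) ^ n - 1) / (2 ^ β - 1)) := htel
    _ ≤ K / 2 * (((2 : ℝ) ^ β) ^ n / (2 ^ β - 1)) := by gcongr; linarith
    _ = _ := by rw [hpow]; field_simp

-- The two diagonals of the parallelogram `x, y, x + t • e, y + t • e` share a midpoint, so the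
-- value of `V` there cancels from the difference of the two second differences.
lemma norm_diffQuot_sub_le (hV : ZygmundOnWith K α Ω V) (hΩ : Convex ℝ Ω) (hK : 0 ≤ K)
    (hα : 0 ≤ α) (he : ‖e‖ = 1) (ht : 0 < t) (hts : t ≤ ‖x - y‖) (hx : x ∈ Ω) (hy : y ∈ Ω)
    (hxt : x + t • e ∈ Ω) (hyt : y + t • e ∈ Ω) :
    ‖diffQuot V e t x - diffQuot V e t y‖ ≤ 2 * K * ‖x - y‖ ^ α / t := by
  have hnorm : ‖t • e‖ = t := by rw [norm_smul, he, mul_one, Real.norm_of_nonneg ht.le]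
  have hmid : midpoint ℝ x (y + t • e) = midpoint ℝ (x + t • e) y := by
    simp only [midpoint_eq_smul_add]; module
  have hdiag₁ : ‖V (x + t • e) + V y - (2 : ℝ) • V (midpoint ℝ (x + t • e) y)‖
      ≤ K * ‖x - y‖ ^ α := by
    refine (hV.norm_add_sub_two_smul_midpoint_le hxt hy (hΩ.midpoint_mem hxt hy)).trans ?_
    have hle := norm_add_le (x - y) (t • e)
    rw [sub_add_eq_add_sub] at hle
    gcongr
    linarith
  have hdiag₂ : ‖V x + V (y + t • e) - (2 : ℝ) • V (midpoint ℝ (x + t • e) y)‖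
      ≤ K * ‖x - y‖ ^ α := by
    rw [← hmid]
    refine (hV.norm_add_sub_two_smul_midpoint_le hx hyt (hΩ.midpoint_mem hx hyt)).trans ?_
    have hle := norm_sub_le (x - y) (t • e)
    rw [sub_sub] at hle
    gcongr
    linarith
  have hquot : diffQuot V e t x - diffQuot V e t y =
      t⁻¹ • ((V (x + t • e) + V y - (2 : ℝ) • V (midpoint ℝ (x + t • e) y)) -
        (V x + V (y + t • e) - (2 : ℝ) • V (midpoint ℝ (x + t • e) y))) := by
    simp only [diffQuot]; module
  rw [hquot, norm_smul, norm_inv, Real.norm_of_nonneg ht.le, inv_mul_eq_div]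
  gcongr
  linarith [norm_sub_le_of_le hdiag₁ hdiag₂]

lemma norm_diffQuot_sub_le_mul_rpow (hV : ZygmundOnWith K α Ω V) (hΩ : Convex ℝ Ω) (hK : 0 ≤ K)
    (hα : 0 ≤ α) (hαβ : α ≤ 1 + β) (he : ‖e‖ = 1) (hxy : 1 ≤ ‖x - y‖) (hts : t ≤ ‖x - y‖)
    (hst : ‖x - y‖ ≤ 8 * t) (hx : x ∈ Ω) (hy : y ∈ Ω) (hxt : x + t • e ∈ Ω)
    (hyt : y + t • e ∈ Ω) :
    ‖diffQuot V e t x - diffQuot V e t y‖ ≤ 16 * K * ‖x - y‖ ^ β := by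
  have ht : 0 < t := by linarith
  have hrpow : ‖x - y‖ ^ α ≤ ‖x - y‖ * ‖x - y‖ ^ β := by
    refine (Real.rpow_le_rpow_of_exponent_le hxy hαβ).trans_eq ?_
    rw [Real.rpow_add (by linarith), Real.rpow_one]
  refine (hV.norm_diffQuot_sub_le hΩ hK hα he ht hts hx hy hxt hyt).trans ?_
  rw [div_le_iff₀ ht]
  calc 2 * K * ‖x - y‖ ^ α ≤ 2 * K * (8 * t * ‖x - y‖ ^ β) := by
        gcongr
        exact hrpow.trans (by gcongr)
    _ = _ := by ring

end ZygmundOnWith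

lemma norm_sub_sub_fderiv_le_of_lipschitz (hΩ : Convex ℝ Ω) (hL : 0 ≤ L)
    (hdiff : ∀ w ∈ Ω, DifferentiableAt ℝ V w)
    (hlip : ∀ w ∈ Ω, ∀ w' ∈ Ω, ‖fderiv ℝ V w - fderiv ℝ V w'‖ ≤ L * ‖w - w'‖)
    (hx : x ∈ Ω) (hy : y ∈ Ω) :
    ‖V y - V x - fderiv ℝ V x (y - x)‖ ≤ L * ‖y - x‖ ^ 2 := by
  have hsub : segment ℝ x y ⊆ Ω := hΩ.segment_subset hx hy
  have hbound : ∀ w ∈ segment ℝ x y, ‖fderiv ℝ V w - fderiv ℝ V x‖ ≤ L * ‖y - x‖ := fun w hw =>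
    (hlip w (hsub hw) x hx).trans (by gcongr; exact norm_sub_le_of_mem_segment hw)
  have hmvt := (convex_segment x y).norm_image_sub_le_of_norm_fderiv_le'
    (fun w hw => hdiff w (hsub hw)) hbound (left_mem_segment ℝ x y) (right_mem_segment ℝ x y)
  rwa [mul_assoc, ← sq] at hmvt

namespace ZygmundOnWith

lemma norm_diffQuot_two_pow_sub_fderiv_le (hV : ZygmundOnWith K α Ω V) (hΩ : Convex ℝ Ω)
    (hK : 0 ≤ K) (hL : 0 ≤ L) (hβ : 0 < β) (hαβ : α ≤ 1 + β)
    (hdiff : ∀ w ∈ Ω, DifferentiableAt ℝ V w)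
    (hlip : ∀ w ∈ Ω, ∀ w' ∈ Ω, ‖fderiv ℝ V w - fderiv ℝ V w'‖ ≤ L * ‖w - w'‖)
    (he : ‖e‖ = 1) (n : ℕ) (hz : z ∈ Ω) (hzn : z + (2 : ℝ) ^ n • e ∈ Ω) :
    ‖diffQuot V e (2 ^ n) z - fderiv ℝ V z e‖ ≤
      K / (2 * (2 ^ β - 1)) * (2 ^ n) ^ β + L := by
  have hze : z + e ∈ Ω := by
    simpa only [one_smul] using
      add_smul_mem_of_convex hΩ hz hzn zero_le_one (one_le_pow₀ one_le_two)
  have hunit : ‖diffQuot V e 1 z - fderiv ℝ V z e‖ ≤ L := by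
    simpa [diffQuot, he] using norm_sub_sub_fderiv_le_of_lipschitz hΩ hL hdiff hlip hz hze
  exact (norm_sub_le_norm_sub_add_norm_sub _ (diffQuot V e 1 z) _).trans <|
    add_le_add (hV.norm_diffQuot_two_pow_sub_le hΩ hK hβ hαβ he n hz hzn) hunit

lemma norm_fderiv_apply_sub_le (hV : ZygmundOnWith K α Ω V) (hΩ : Convex ℝ Ω) (hK : 0 ≤ K)
    (hL : 0 ≤ L) (hβ : 0 < β) (hα : 0 ≤ α) (hαβ : α ≤ 1 + β)
    (hdiff : ∀ w ∈ Ω, DifferentiableAt ℝ V w)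
    (hlip : ∀ w ∈ Ω, ∀ w' ∈ Ω, ‖fderiv ℝ V w - fderiv ℝ V w'‖ ≤ L * ‖w - w'‖)
    (he : ‖e‖ = 1) (hxy : 4 ≤ ‖x - y‖) (hx : x ∈ Ω) (hy : y ∈ Ω)
    (hxe : x + (‖x - y‖ / 4) • e ∈ Ω) (hye : y + (‖x - y‖ / 4) • e ∈ Ω) :
    ‖fderiv ℝ V x e - fderiv ℝ V y e‖ ≤
      (2 * L + (16 + (2 ^ β - 1)⁻¹) * K) * ‖x - y‖ ^ β := by
  set s := ‖x - y‖
  have hratio : 0 < (2 : ℝ) ^ β - 1 := sub_pos.2 (Real.one_lt_rpow one_lt_two hβ)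
  obtain ⟨n, hn, hn'⟩ := exists_nat_pow_near (by linarith : 1 ≤ s / 4) (one_lt_two (α := ℝ))
  rw [pow_succ] at hn'
  have hpos : (0 : ℝ) < 2 ^ n := by positivity
  have hxn : x + (2 : ℝ) ^ n • e ∈ Ω := add_smul_mem_of_convex hΩ hx hxe hpos.le hn
  have hyn : y + (2 : ℝ) ^ n • e ∈ Ω := add_smul_mem_of_convex hΩ hy hye hpos.le hn
  have hscale {z : E} (hz : z ∈ Ω) (hzn : z + (2 : ℝ) ^ n • e ∈ Ω) :
      ‖diffQuot V e (2 ^ n) z - fderiv ℝ V z e‖ ≤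
        (K / (2 * (2 ^ β - 1)) + L) * s ^ β := by
    have hsβ : 1 ≤ s ^ β := Real.one_le_rpow (by linarith) hβ.le
    calc _ ≤ K / (2 * (2 ^ β - 1)) * (2 ^ n) ^ β + L :=
          hV.norm_diffQuot_two_pow_sub_fderiv_le hΩ hK hL hβ hαβ hdiff hlip he n hz hzn
      _ ≤ K / (2 * (2 ^ β - 1)) * s ^ β + L * s ^ β := by
          gcongr
          · linarith
          · exact le_mul_of_one_le_right hL hsβ
      _ = _ := by ring
  have hpar : ‖diffQuot V e (2 ^ n) x - diffQuot V e (2 ^ n) y‖ ≤ 16 * K * s ^ β :=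
    hV.norm_diffQuot_sub_le_mul_rpow hΩ hK hα hαβ he (by linarith) (by linarith) (by linarith)
      hx hy hxn hyn
  have htri := dist_triangle4_left (diffQuot V e (2 ^ n) x) (diffQuot V e (2 ^ n) y)
    (fderiv ℝ V x e) (fderiv ℝ V y e)
  simp only [dist_eq_norm] at htri
  calc _ ≤ _ := htri
    _ ≤ 16 * K * s ^ β + ((K / (2 * (2 ^ β - 1)) + L) * s ^ β +
        (K / (2 * (2 ^ β - 1)) + L) * s ^ β) := by
      gcongr
      · exact hscale hx hxn
      · exact hscale hy hyn
    _ = _ := by field_simp; ring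

theorem norm_fderiv_sub_le (hV : ZygmundOnWith K α (ball 0 (2 * r - 1)) V) (hK : 0 ≤ K)
    (hL : 0 ≤ L) (hβ : 0 < β) (hβ₁ : β ≤ 1) (hα : 0 ≤ α) (hαβ : α ≤ 1 + β)
    (hdiff : ∀ w ∈ ball 0 (2 * r - 1), DifferentiableAt ℝ V w)
    (hlip : ∀ w ∈ ball 0 (2 * r - 1), ∀ w' ∈ ball 0 (2 * r - 1),
      ‖fderiv ℝ V w - fderiv ℝ V w'‖ ≤ L * ‖w - w'‖)
    (hr : 1 ≤ r) (hx : x ∈ ball 0 r) (hy : y ∈ ball 0 r) :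
    ‖fderiv ℝ V x - fderiv ℝ V y‖ ≤
      (4 * L + (16 + (2 ^ β - 1)⁻¹) * K) * ‖x - y‖ ^ β := by
  have hratio : 0 < (2 : ℝ) ^ β - 1 := sub_pos.2 (Real.one_lt_rpow one_lt_two hβ)
  have hball : ball (0 : E) r ⊆ ball 0 (2 * r - 1) := ball_subset_ball (by linarith)
  rcases le_total ‖x - y‖ 4 with hnear | hfar
  · have hrpow : ‖x - y‖ / 4 ≤ ‖x - y‖ ^ β :=
      (Real.self_le_rpow_of_le_one (by positivity) (by linarith) hβ₁).trans (by
        gcongr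
        exact div_le_self (norm_nonneg _) (by norm_num))
    calc _ ≤ L * ‖x - y‖ := hlip x (hball hx) y (hball hy)
      _ ≤ (4 * L) * ‖x - y‖ ^ β := by nlinarith
      _ ≤ _ := by gcongr; exact le_add_of_nonneg_right (by positivity)
  · refine ContinuousLinearMap.opNorm_le_of_unit_norm (𝕜 := ℝ) (by positivity) fun e he => ?_
    have hroom {z : E} (hz : z ∈ ball 0 r) : z + (‖x - y‖ / 4) • e ∈ ball 0 (2 * r - 1) := by
      rw [mem_ball_zero_iff] at hx hy hz ⊢
      have hnorm : ‖(‖x - y‖ / 4) • e‖ = ‖x - y‖ / 4 := by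
        rw [norm_smul, he, mul_one, Real.norm_of_nonneg (by positivity)]
      linarith [norm_add_le z ((‖x - y‖ / 4) • e), norm_sub_le x y]
    refine (hV.norm_fderiv_apply_sub_le (convex_ball _ _) hK hL hβ hα hαβ hdiff hlip he hfar
      (hball hx) (hball hy) (hroom hx) (hroom hy)).trans ?_
    gcongr
    norm_num

end ZygmundOnWith

end DifferenceQuotients

lemma fderiv_neg_of_forall_neg {E F : Type*} [NormedAddCommGroup E] [NormedSpace ℝ E]
    [NormedAddCommGroup F] [NormedSpace ℝ F] {f g : E → F} (hfg : ∀ y, f (-y) = g y) (y : E) :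
    fderiv ℝ f (-y) = -fderiv ℝ g y := by
  have hcomp := fderiv_comp_smul (𝕜 := ℝ) (f := f) (x := y) (-1)
  simp only [neg_one_smul, hfg] at hcomp
  rw [hcomp, neg_neg]

lemma even_fderiv_fderiv {E F : Type*} [NormedAddCommGroup E] [NormedSpace ℝ E]
    [NormedAddCommGroup F] [NormedSpace ℝ F] {f : E → F} (hf : Function.Even f) :
    Function.Even (fderiv ℝ (fderiv ℝ f)) := fun y => by
  rw [fderiv_neg_of_forall_neg (g := -fderiv ℝ f) (fderiv_neg_of_forall_neg hf), fderiv_neg,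
    neg_neg]

lemma integral_add_sub_two_smul {X G : Type*} [MeasurableSpace X] {μ : Measure X}
    [NormedAddCommGroup G] [NormedSpace ℝ G] {a b c : X → G} (ha : Integrable a μ)
    (hb : Integrable b μ) (hc : Integrable c μ) :
    ∫ y, (a y + b y - (2 : ℝ) • c y) ∂μ =
      ∫ y, a y ∂μ + ∫ y, b y ∂μ - (2 : ℝ) • ∫ y, c y ∂μ := by
  have hab : Integrable (fun y => a y + b y) μ := ha.add hb
  have hc₂ : Integrable (fun y => (2 : ℝ) • c y) μ := hc.smul _
  rw [integral_sub hab hc₂, integral_add ha hb, integral_smul]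

section Convolution

variable {F₁ F₂ G : Type*} [NormedAddCommGroup F₁] [NormedSpace ℝ F₁] [NormedAddCommGroup F₂]
  [NormedSpace ℝ F₂] [NormedAddCommGroup G] [NormedSpace ℝ G] (L : F₁ →L[ℝ] F₂ →L[ℝ] G)
  {K α β r : ℝ}

-- Averaging the integral with its reflection turns `u (x - y)` into half a second difference of
-- `u`; the term `2 • u x` is free since the kernel has mean zero.
lemma norm_convolution_le_of_even {X : Type*} [AddGroup X] [MeasurableSpace X] [MeasurableNeg X]
    {μ : Measure X} [μ.IsNegInvariant] {f : X → F₁} {u : X → F₂} {x : X}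
    (hf : Integrable f μ) (heven : Function.Even f) (hmean : ∫ y, L (f y) (u x) ∂μ = 0)
    (hfu : ConvolutionExistsAt f u x L μ)
    (hu : ∀ y ∈ Function.support f, ‖u (x + y) + u (x - y) - (2 : ℝ) • u x‖ ≤ K) :
    ‖(f ⋆[L, μ] u) x‖ ≤ ‖L‖ * K / 2 * ∫ y, ‖f y‖ ∂μ := by
  have hminus : Integrable (fun y => L (f y) (u (x - y))) μ := hfu.integrable
  have hplus : Integrable (fun y => L (f y) (u (x + y))) μ := by
    simpa only [heven.eq, sub_neg_eq_add] using hminus.comp_neg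
  have hconst : Integrable (fun y => L (f y) (u x)) μ := (L.flip (u x)).integrable_comp hf
  have hreflect : ∫ y, L (f y) (u (x + y)) ∂μ = (f ⋆[L, μ] u) x := by
    rw [← integral_neg_eq_self]
    simp only [heven.eq, ← sub_eq_add_neg, convolution_def]
  have hsecond : ∫ y, L (f y) (u (x + y) + u (x - y) - (2 : ℝ) • u x) ∂μ =
      (2 : ℝ) • (f ⋆[L, μ] u) x := by
    simp only [map_sub, map_add, map_smul]
    rw [integral_add_sub_two_smul hplus hminus hconst, hmean, hreflect, smul_zero, sub_zero,
      two_smul, convolution_def]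
  have hbound : ‖(2 : ℝ) • (f ⋆[L, μ] u) x‖ ≤ ∫ y, ‖L‖ * K * ‖f y‖ ∂μ := by
    rw [← hsecond]
    refine norm_integral_le_of_norm_le (hf.norm.const_mul _) (Eventually.of_forall fun y => ?_)
    by_cases hy : f y = 0
    · simp [hy]
    · calc _ ≤ ‖L‖ * ‖f y‖ * _ := L.le_opNorm₂ _ _
        _ ≤ ‖L‖ * ‖f y‖ * K := by gcongr; exact hu y hy
        _ = ‖L‖ * K * ‖f y‖ := by ring
  rw [norm_smul, Real.norm_two, integral_const_mul] at hbound
  linarith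

variable {E : Type*} [NormedAddCommGroup E] [MeasurableSpace E] {μ : Measure E} {f : E → F₁}
  {u : E → F₂} {x y : E}

lemma ZygmundOnWith.convolution {Ω Ω' : Set E} (hu : ZygmundOnWith K α Ω u) (hf : Integrable f μ)
    (hfu : ConvolutionExists f u L μ) (hsub : ∀ x ∈ Ω', ∀ y ∈ Function.support f, x - y ∈ Ω) :
    ZygmundOnWith (‖L‖ * (∫ y, ‖f y‖ ∂μ) * K) α Ω' (f ⋆[L, μ] u) := by
  intro x h hx hxp hxm
  have hint (z : E) : Integrable (fun y => L (f y) (u (z - y))) μ := (hfu z).integrable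
  have hsecond : (f ⋆[L, μ] u) (x + h) + (f ⋆[L, μ] u) (x - h) - (2 : ℝ) • (f ⋆[L, μ] u) x =
      ∫ y, L (f y) (u (x - y + h) + u (x - y - h) - (2 : ℝ) • u (x - y)) ∂μ := by
    simp only [map_sub, map_add, map_smul, sub_add_eq_add_sub, sub_right_comm x _ h]
    rw [integral_add_sub_two_smul (hint _) (hint _) (hint _)]
    simp only [convolution_def]
  rw [hsecond]
  calc _ ≤ ∫ y, ‖L‖ * K * ‖h‖ ^ α * ‖f y‖ ∂μ := by
        refine norm_integral_le_of_norm_le (hf.norm.const_mul _)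
          (Eventually.of_forall fun y => ?_)
        by_cases hy : f y = 0
        · simp [hy]
        · have hdiff : ‖u (x - y + h) + u (x - y - h) - (2 : ℝ) • u (x - y)‖ ≤ K * ‖h‖ ^ α :=
            hu (hsub x hx y hy) (sub_add_eq_add_sub x y h ▸ hsub _ hxp y hy)
              (sub_right_comm x h y ▸ hsub _ hxm y hy)
          calc _ ≤ ‖L‖ * ‖f y‖ * _ := L.le_opNorm₂ _ _
            _ ≤ ‖L‖ * ‖f y‖ * (K * ‖h‖ ^ α) := by gcongr
            _ = ‖L‖ * K * ‖h‖ ^ α * ‖f y‖ := by ring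
    _ = _ := by rw [integral_const_mul]; ring

variable [NormedSpace ℝ E]

/-- The constant `2 ∫ ‖D²f‖ + (16 + 1 / (2 ^ β - 1)) ∫ ‖f‖` of the Hölder estimate for the
derivative of a convolution with `f`. The first integral comes from the bound on the second
derivative of the convolution, the second one from the Zygmund bound that it inherits. -/
def mollifierConst (β : ℝ) (μ : Measure E) (f : E → F₁) : ℝ :=
  2 * ∫ y, ‖fderiv ℝ (fderiv ℝ f) y‖ ∂μ + (16 + (2 ^ β - 1)⁻¹) * ∫ y, ‖f y‖ ∂μ

lemma mollifierConst_nonneg (hβ : 0 < β) : 0 ≤ mollifierConst β μ f := by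
  have hratio : 0 < (2 : ℝ) ^ β - 1 := sub_pos.2 (Real.one_lt_rpow one_lt_two hβ)
  unfold mollifierConst
  positivity

variable [BorelSpace E] [μ.IsNegInvariant] [μ.IsAddLeftInvariant] [SFinite μ]

lemma fderiv_convolution_left (hf : ContDiff ℝ 1 f) (hfc : HasCompactSupport f)
    (hu : LocallyIntegrable u μ) :
    fderiv ℝ (f ⋆[L, μ] u) = fderiv ℝ f ⋆[L.precompL E, μ] u :=
  funext fun x => (hfc.hasFDerivAt_convolution_left L hf hu x).fderiv

variable [IsLocallyFiniteMeasure μ]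

lemma integral_precompL_fderiv_eq_zero (hf : ContDiff ℝ 1 f) (hfc : HasCompactSupport f)
    (a : F₂) : ∫ y, L.precompL E (fderiv ℝ f y) a ∂μ = 0 := by
  have hderiv := hfc.hasFDerivAt_convolution_left L hf (locallyIntegrable_const (μ := μ) a) 0
  have hconst : (f ⋆[L, μ] fun _ => a) = fun _ => ∫ y, L (f y) a ∂μ := rfl
  rw [hconst] at hderiv
  exact hderiv.unique (hasFDerivAt_const _ _)

lemma norm_fderiv_convolution_le_of_even_fderiv (hf : ContDiff ℝ 1 f)
    (hfc : HasCompactSupport f) (heven : Function.Even (fderiv ℝ f)) (hu : LocallyIntegrable u μ)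
    (hx : ∀ y ∈ tsupport f, ‖u (x + y) + u (x - y) - (2 : ℝ) • u x‖ ≤ K) (hK : 0 ≤ K) :
    ‖fderiv ℝ (f ⋆[L, μ] u) x‖ ≤ ‖L‖ * K / 2 * ∫ y, ‖fderiv ℝ f y‖ ∂μ := by
  have hf' : Continuous (fderiv ℝ f) := hf.continuous_fderiv one_ne_zero
  have hfc' : HasCompactSupport (fderiv ℝ f) := hfc.fderiv ℝ
  rw [fderiv_convolution_left L hf hfc hu]
  refine (norm_convolution_le_of_even _ (hf'.integrable_of_hasCompactSupport hfc') heven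
    (integral_precompL_fderiv_eq_zero L hf hfc _) (hfc'.convolutionExists_left _ hf' hu x)
    fun y hy => hx y (support_fderiv_subset ℝ hy)).trans ?_
  gcongr
  exact L.norm_precompL_le E

lemma norm_fderiv_fderiv_convolution_le (hf : ContDiff ℝ 2 f) (hfc : HasCompactSupport f)
    (heven : Function.Even f) (hu : LocallyIntegrable u μ)
    (hx : ∀ y ∈ tsupport f, ‖u (x + y) + u (x - y) - (2 : ℝ) • u x‖ ≤ K) (hK : 0 ≤ K) :
    ‖fderiv ℝ (fderiv ℝ (f ⋆[L, μ] u)) x‖ ≤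
      ‖L‖ * K / 2 * ∫ y, ‖fderiv ℝ (fderiv ℝ f) y‖ ∂μ := by
  rw [fderiv_convolution_left L (hf.of_le one_le_two) hfc hu]
  refine (norm_fderiv_convolution_le_of_even_fderiv (L.precompL E)
    (hf.fderiv_right (by norm_num)) (hfc.fderiv ℝ) (even_fderiv_fderiv heven) hu
    (fun y hy => hx y (tsupport_fderiv_subset ℝ hy)) hK).trans ?_
  gcongr
  exact L.norm_precompL_le E

theorem norm_fderiv_convolution_sub_le (hβ : 0 < β) (hβ₁ : β ≤ 1) (hα : 0 ≤ α)
    (hαβ : α ≤ 1 + β) (hf : ContDiff ℝ 2 f) (hfc : HasCompactSupport f)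
    (hsupp : tsupport f ⊆ closedBall 0 1) (heven : Function.Even f)
    (hu : LocallyIntegrable u μ) (hK : 0 ≤ K) (hr : 1 ≤ r)
    (hZ : ZygmundOnWith K α (ball 0 (2 * r)) u) (hx : x ∈ ball 0 r) (hy : y ∈ ball 0 r) :
    ‖fderiv ℝ (f ⋆[L, μ] u) x - fderiv ℝ (f ⋆[L, μ] u) y‖ ≤
      ‖L‖ * mollifierConst β μ f * K * ‖x - y‖ ^ β := by
  have hroom {z w : E} (hz : z ∈ ball 0 (2 * r - 1)) (hw : w ∈ tsupport f) :
      z + w ∈ ball 0 (2 * r) ∧ z - w ∈ ball 0 (2 * r) := by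
    have hw₁ := mem_closedBall_zero_iff.1 (hsupp hw)
    rw [mem_ball_zero_iff] at hz
    simp only [mem_ball_zero_iff]
    constructor <;> linarith [norm_add_le z w, norm_sub_le z w]
  have hhess : ∀ z ∈ ball 0 (2 * r - 1), ‖fderiv ℝ (fderiv ℝ (f ⋆[L, μ] u)) z‖ ≤
      ‖L‖ * K / 2 * ∫ y, ‖fderiv ℝ (fderiv ℝ f) y‖ ∂μ := fun z hz =>
    norm_fderiv_fderiv_convolution_le L hf hfc heven hu (hK := hK) fun w hw =>
      (hZ (ball_subset_ball (by linarith) hz) (hroom hz hw).1 (hroom hz hw).2).trans <|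
        mul_le_of_le_one_right hK <|
          Real.rpow_le_one (norm_nonneg _) (mem_closedBall_zero_iff.1 (hsupp hw)) hα
  have hsmooth : ContDiff ℝ 2 (f ⋆[L, μ] u) := hfc.contDiff_convolution_left L hf hu
  have hlip : ∀ z ∈ ball 0 (2 * r - 1), ∀ w ∈ ball 0 (2 * r - 1),
      ‖fderiv ℝ (f ⋆[L, μ] u) z - fderiv ℝ (f ⋆[L, μ] u) w‖ ≤
        (‖L‖ * K / 2 * ∫ y, ‖fderiv ℝ (fderiv ℝ f) y‖ ∂μ) * ‖z - w‖ := fun z hz w hw =>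
    (convex_ball _ _).norm_image_sub_le_of_norm_fderiv_le (𝕜 := ℝ)
      (fun v _ => (hsmooth.fderiv_right le_rfl).differentiable one_ne_zero v) hhess hw hz
  have hZconv := hZ.convolution L (hf.continuous.integrable_of_hasCompactSupport hfc)
    (hfc.convolutionExists_left L hf.continuous hu)
    fun z hz w hw => (hroom hz (subset_tsupport f hw)).2
  refine (hZconv.norm_fderiv_sub_le (by positivity) (by positivity) hβ hβ₁ hα hαβ
    (fun z _ => hsmooth.differentiable two_ne_zero z) hlip hr hx hy).trans_eq ?_
  rw [mollifierConst]
  ring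

end Convolution

section Scaling

variable {E : Type*} [NormedAddCommGroup E] [NormedSpace ℝ E] {R : ℝ}

lemma smul_mem_ball_zero {ρ : ℝ} (hR : 0 < R) {z : E} (hz : z ∈ ball 0 ρ) :
    R • z ∈ ball 0 (R * ρ) := by
  rw [mem_ball_zero_iff] at hz ⊢
  rw [norm_smul, Real.norm_of_nonneg hR.le]
  gcongr

lemma ZygmundOnWith.comp_smul {F : Type*} [NormedAddCommGroup F] [NormedSpace ℝ F] {K α : ℝ}
    {Ω : Set E} {u : E → F} (hu : ZygmundOnWith K α Ω u) (hR : 0 ≤ R) :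
    ZygmundOnWith (K * R ^ α) α ((R • ·) ⁻¹' Ω) (fun z => u (R • z)) := by
  intro x h hx hxp hxm
  simp only [mem_preimage, smul_add, smul_sub] at hx hxp hxm ⊢
  refine (hu hx hxp hxm).trans_eq ?_
  rw [norm_smul, Real.norm_of_nonneg hR, Real.mul_rpow hR (norm_nonneg _), mul_assoc]

variable [FiniteDimensional ℝ E] [MeasurableSpace E] [BorelSpace E] {μ : Measure E}
  [μ.IsAddHaarMeasure]

lemma locallyIntegrable_comp_smul {F : Type*} [NormedAddCommGroup F] {u : E → F}
    (hu : LocallyIntegrable u μ) (hR : R ≠ 0) : LocallyIntegrable (fun z => u (R • z)) μ := by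
  refine (locallyIntegrable_map_homeomorph (Homeomorph.smulOfNeZero R hR)).1 ?_
  have hmap : Measure.map (Homeomorph.smulOfNeZero R hR) μ =
      ENNReal.ofReal |(R ^ Module.finrank ℝ E)⁻¹| • μ := Measure.map_addHaar_smul μ hR
  rw [hmap]
  intro x
  obtain ⟨s, hs, hint⟩ := hu x
  refine ⟨s, hs, ?_⟩
  rw [IntegrableOn, Measure.restrict_smul]
  exact Integrable.smul_measure hint ENNReal.ofReal_ne_top

lemma norm_fderiv_mollification_sub_le {β α K R₁ : ℝ} (hβ : 0 < β) (hβ₁ : β ≤ 1) (hα : 0 ≤ α)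
    (hαβ : α ≤ 1 + β) {ζ u : E → ℝ} (hζ : ContDiff ℝ 2 ζ) (hsupp : tsupport ζ ⊆ closedBall 0 1)
    (heven : Function.Even ζ) (hR : 0 < R) (hRR₁ : R ≤ R₁) (hu : LocallyIntegrable u μ)
    (hK : 0 ≤ K) (hZ : ZygmundOnWith K α (ball 0 (2 * R₁)) u) {x y : E} (hx : x ∈ ball 0 R₁)
    (hy : y ∈ ball 0 R₁) :
    ‖fderiv ℝ (fun x => ∫ y, u (x - R • y) * ζ y ∂μ) x -
        fderiv ℝ (fun x => ∫ y, u (x - R • y) * ζ y ∂μ) y‖ ≤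
      mollifierConst β μ ζ * R ^ (α - 1 - β) * K * ‖x - y‖ ^ β := by
  set V : E → ℝ := ζ ⋆[ContinuousLinearMap.lsmul ℝ ℝ, μ] fun z => u (R • z)
  have hV : (fun x => ∫ y, u (x - R • y) * ζ y ∂μ) = fun x => V (R⁻¹ • x) := by
    ext x
    simp only [V, convolution_lsmul, smul_sub, smul_inv_smul₀ hR.ne', smul_eq_mul, mul_comm]
  have hcompact : HasCompactSupport ζ :=
    (isCompact_closedBall 0 1).of_isClosed_subset (isClosed_tsupport ζ) hsupp
  have hZR : ZygmundOnWith (K * R ^ α) α (ball 0 (2 * (R⁻¹ * R₁))) fun z => u (R • z) := by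
    have hpre : ∀ z ∈ ball (0 : E) (2 * (R⁻¹ * R₁)), R • z ∈ ball 0 (2 * R₁) := fun z hz => by
      have hmem := smul_mem_ball_zero hR hz
      rwa [mul_left_comm, mul_inv_cancel_left₀ hR.ne'] at hmem
    exact fun z h hz hzp hzm => hZ.comp_smul hR.le (hpre _ hz) (hpre _ hzp) (hpre _ hzm)
  have hunit := norm_fderiv_convolution_sub_le (ContinuousLinearMap.lsmul ℝ ℝ) hβ hβ₁ hα hαβ hζ
    hcompact hsupp heven (locallyIntegrable_comp_smul hu hR.ne') (by positivity)
    (by rwa [inv_mul_eq_div, one_le_div hR]) hZR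
    (smul_mem_ball_zero (inv_pos.2 hR) hx) (smul_mem_ball_zero (inv_pos.2 hR) hy)
  rw [hV, fderiv_comp_smul, fderiv_comp_smul, ← smul_sub, norm_smul, norm_inv,
    Real.norm_of_nonneg hR.le]
  rw [← smul_sub, norm_smul, norm_inv, Real.norm_of_nonneg hR.le, ContinuousLinearMap.opNorm_lsmul,
    Real.mul_rpow (by positivity) (norm_nonneg _), Real.inv_rpow hR.le] at hunit
  calc _ ≤ R⁻¹ * _ := mul_le_mul_of_nonneg_left hunit (by positivity)
    _ = _ := by
      rw [Real.rpow_sub hR, Real.rpow_sub_one hR.ne']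
      ring

end Scaling

theorem gradient_mollify_holder_estimate_general {E : Type*} [NormedAddCommGroup E]
    [NormedSpace ℝ E] [FiniteDimensional ℝ E] [MeasurableSpace E] [BorelSpace E] (μ : Measure E)
    [μ.IsAddHaarMeasure] {β α : ℝ} (hβ : β ∈ Set.Ioc (0 : ℝ) 1) (hα : 0 ≤ α) (hαβ : α ≤ 1 + β)
    {ζ : E → ℝ} (hζ : ContDiff ℝ 2 ζ) (hsupp : tsupport ζ ⊆ closedBall 0 1)
    (heven : Function.Even ζ) :
    ∃ C : ℝ, 0 < C ∧ ∀ R R₁ : ℝ, 0 < R → R ≤ R₁ → ∀ u : E → ℝ, LocallyIntegrable u μ →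
      holderSemi β (ball 0 R₁) (fderiv ℝ fun x => ∫ y, u (x - R • y) * ζ y ∂μ) ≤
        ENNReal.ofReal (C * R ^ (α - 1 - β)) * zygmundSemi α (ball 0 (2 * R₁)) u := by
  have hnonneg : 0 ≤ mollifierConst β μ ζ := mollifierConst_nonneg hβ.1
  refine ⟨mollifierConst β μ ζ + 1, by positivity, fun R R₁ hR hRR₁ u hu => ?_⟩
  have hpos : 0 < (mollifierConst β μ ζ + 1) * R ^ (α - 1 - β) := by positivity
  rcases eq_or_ne (zygmundSemi α (ball 0 (2 * R₁)) u) ⊤ with htop | hfin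
  · rw [htop, ENNReal.mul_top (ENNReal.ofReal_pos.2 hpos).ne']
    exact le_top
  · rw [← ENNReal.ofReal_toReal hfin, ← ENNReal.ofReal_mul hpos.le]
    refine holderSemi_le_ofReal fun x hx y hy => ?_
    refine (norm_fderiv_mollification_sub_le hβ.1 hβ.2 hα hαβ hζ hsupp heven hR hRR₁ hu
      ENNReal.toReal_nonneg (zygmundOnWith_toReal_zygmundSemi hfin) hx hy).trans ?_
    gcongr
    exact le_add_of_nonneg_right zero_le_one

/-- Lemma 2.1: Hölder estimate for the gradient of a mollification in terms of the Zygmund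
seminorm. -/
theorem gradient_mollify_holder_estimate
    (d : ℕ) (hd : 1 ≤ d) (β α : ℝ) (hβ : β ∈ Set.Ioo (0:ℝ) 1)
    (hα : 0 < α) (hα1 : α < 1 + β)
    (ζ : EuclideanSpace ℝ (Fin d) → ℝ)
    (hζsm : ContDiff ℝ (⊤ : ℕ∞) ζ) (hζsupp : tsupport ζ ⊆ ball 0 1)
    (hζnn : ∀ x, 0 ≤ ζ x) (hζrad : ∀ x y, ‖x‖ = ‖y‖ → ζ x = ζ y)
    (hζint : (∫ y, ζ y) = 1) :
    ∃ C : ℝ, 0 < C ∧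
      ∀ R R1 : ℝ, 0 < R → R ≤ R1 →
        ∀ u : EuclideanSpace ℝ (Fin d) → ℝ, Continuous u →
          zygmundSemi α (ball (0:EuclideanSpace ℝ (Fin d)) (2 * R1)) u < ⊤ →
          holderSemi β (ball (0:EuclideanSpace ℝ (Fin d)) R1) (gradient (mollify R ζ u)) ≤
            ENNReal.ofReal (C * R ^ (α - 1 - β)) *
              zygmundSemi α (ball (0:EuclideanSpace ℝ (Fin d)) (2 * R1)) u := by
  obtain ⟨C, hC, hmain⟩ := gradient_mollify_holder_estimate_general volume
    (Ioo_subset_Ioc_self hβ) hα.le hα1.le (contDiff_infty.1 hζsm 2)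
    (hζsupp.trans ball_subset_closedBall) fun x => hζrad _ _ (norm_neg x)
  refine ⟨C, hC, fun R R1 hR hRR1 u hu _ => ?_⟩
  rw [holderSemi_gradient]
  exact hmain R R1 hR hRR1 u hu.locallyIntegrable
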